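/- Let G be an atomic splittable polymatroid congestion game with m = |E| resources in which every cost function c_{i,e} and every derivative c'_{i,e} is L-Lipschitz, and set δ = max_{i ∈ N} d_i. Let k > 0 satisfy ρ_i(U)/k ∈ ℕ for all players i and all U ⊆ E, and d_i/k ∈ ℕ for all i. Then every exact equilibrium x of the k-integral game G_k is a (2·k·L·m²·δ·(δ+1))-approximate equilibrium of G; that is, π_i(y_i, x_{−i}) ≥ π_i(x) − 2kLm²δ(δ+1) for every player i and every y_i ∈ P_{ρ_i}(d_i). -/

import Mathlib

/-- A rank function: submodular, monotone, normalized set function. -/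
def IsRank {E : Type*} [Fintype E] [DecidableEq E] (ρ : Finset E → ℝ) : Prop :=
  (∀ U V : Finset E, ρ (U ∪ V) + ρ (U ∩ V) ≤ ρ U + ρ V) ∧
  (∀ U V : Finset E, U ⊆ V → ρ U ≤ ρ V) ∧ ρ ∅ = 0

/-- Membership in the polymatroid base polytope `P_ρ(d)`. -/
def memBase {E : Type*} [Fintype E] [DecidableEq E] (ρ : Finset E → ℝ) (d : ℝ)
    (x : E → ℝ) : Prop :=
  (∀ e, 0 ≤ x e) ∧ (∀ U : Finset E, ∑ e ∈ U, x e ≤ ρ U) ∧ (∑ e, x e = d)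

/-- Membership in the `k`-integral base polytope `P^k_ρ(d)`. -/
def memKBase {E : Type*} [Fintype E] [DecidableEq E] (ρ : Finset E → ℝ) (d k : ℝ)
    (x : E → ℝ) : Prop :=
  memBase ρ d x ∧ ∀ e, ∃ q : ℕ, x e = k * q

/-!
Only one player has to be considered, the other players entering through the load `ℓ`. Convexity
and monotonicity of the costs bound the cost change of any deviation from below by the linear form
of the marginal costs. This linear form is almost minimal at a `k`-integral best response: shifting
one packet of size `k` is feasible from `h` to `e` whenever `h` lies in every tight set containing
`e`, so the marginal cost at `h` exceeds the one at `e` by at most the second-order error divided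
by `k`. Tight sets form a lattice, and a weight function that decreases along this dependence
relation has tight sublevel sets, so by Abel summation it is minimized over the base polytope
at `x`.
-/

open Finset
open scoped NNReal

theorem convexOn_add_deriv_mul_le {S : Set ℝ} {f : ℝ → ℝ} {a b : ℝ} (hf : ConvexOn ℝ S f)
    (ha : a ∈ S) (hb : b ∈ S) (hfa : DifferentiableAt ℝ f a) :
    f a + deriv f a * (b - a) ≤ f b := by
  rcases lt_trichotomy a b with hab | rfl | hba
  · have hslope := hf.deriv_le_slope ha hb hab hfa
    rw [slope_def_field, le_div_iff₀ (sub_pos.2 hab)] at hslope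
    linarith
  · simp
  · have hslope := hf.slope_le_deriv hb ha hba hfa
    rw [slope_def_field, div_le_iff₀ (sub_pos.2 hba)] at hslope
    linarith

theorem norm_sub_sub_smul_deriv_le {𝕜 F : Type*} [RCLike 𝕜] [NormedAddCommGroup F]
    [NormedSpace 𝕜 F] {f : 𝕜 → F} {L : ℝ≥0} (hf : Differentiable 𝕜 f)
    (hf' : LipschitzWith L (deriv f)) (a b : 𝕜) :
    ‖f b - f a - (b - a) • deriv f a‖ ≤ L * ‖b - a‖ ^ 2 := by
  have hderiv (t : 𝕜) :
      HasDerivAt (fun t => f t - (t - a) • deriv f a) (deriv f t - deriv f a) t := by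
    simpa using
      (hf t).hasDerivAt.fun_sub (((hasDerivAt_id t).sub_const a).smul_const (deriv f a))
  have hbound (t : 𝕜) (ht : t ∈ segment ℝ a b) : ‖deriv f t - deriv f a‖ ≤ L * ‖b - a‖ :=
    (hf'.norm_sub_le t a).trans (by gcongr; exact norm_sub_le_of_mem_segment ht)
  have hmvt := (convex_segment a b).norm_image_sub_le_of_norm_hasDerivWithin_le
    (fun t _ => (hderiv t).hasDerivWithinAt) hbound
    (left_mem_segment ℝ a b) (right_mem_segment ℝ a b)
  calc ‖f b - f a - (b - a) • deriv f a‖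
      = ‖f b - (b - a) • deriv f a - (f a - (a - a) • deriv f a)‖ := by
        rw [sub_self, zero_smul, sub_zero, sub_right_comm]
    _ ≤ L * ‖b - a‖ * ‖b - a‖ := hmvt
    _ = L * ‖b - a‖ ^ 2 := by ring

theorem mul_add_le_of_lipschitzWith_deriv {f : ℝ → ℝ} {L : ℝ≥0}
    (hf : Differentiable ℝ f) (hlip : LipschitzWith L f) (hlip' : LipschitzWith L (deriv f))
    (a s : ℝ) {t : ℝ} (ht : 0 ≤ t) :
    f (a + s) * (t + s) ≤ f a * t + (f a + t * deriv f a) * s + L * (t + 1) * s ^ 2 := by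
  have htaylor : f (a + s) - f a - s * deriv f a ≤ L * s ^ 2 := by
    simpa using (le_abs_self _).trans (norm_sub_sub_smul_deriv_le hf hlip' a (a + s))
  have hincrement : (f (a + s) - f a) * s ≤ L * s ^ 2 :=
    calc (f (a + s) - f a) * s ≤ |f (a + s) - f a| * |s| := abs_mul _ s ▸ le_abs_self _
      _ ≤ L * |s| * |s| := by
          gcongr
          simpa using hlip.norm_sub_le (a + s) a
      _ = L * s ^ 2 := by rw [mul_assoc, abs_mul_abs_self, sq]
  linarith [mul_le_mul_of_nonneg_right htaylor ht]

theorem sum_update_eq_add_sub {ι M : Type*} [Fintype ι] [DecidableEq ι] [AddCommGroup M]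
    (f : ι → M) (i : ι) (b : M) : ∑ j, Function.update f i b j = ∑ j, f j + (b - f i) := by
  rw [sum_update_of_mem (mem_univ i), ← erase_eq, ← add_sum_erase univ f (mem_univ i)]
  abel

theorem sum_add_single_sub_single {ι M : Type*} [DecidableEq ι] [AddCommGroup M] (f : ι → M)
    (i j : ι) (b : M) (s : Finset ι) :
    ∑ a ∈ s, (f + Pi.single i b - Pi.single j b : ι → M) a =
      ∑ a ∈ s, f a + (if i ∈ s then b else 0) - if j ∈ s then b else 0 := by
  simp only [Pi.sub_apply, Pi.add_apply, sum_sub_distrib, sum_add_distrib, sum_pi_single']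

theorem sum_sq_single_sub_single_le {ι R : Type*} [Fintype ι] [DecidableEq ι] [CommRing R]
    [LinearOrder R] [IsStrictOrderedRing R] {k : R} (hk : 0 ≤ k) (i j : ι) :
    ∑ a, (Pi.single i k - Pi.single j k : ι → R) a ^ 2 ≤ 2 * k ^ 2 := by
  have hnonneg (l a : ι) : 0 ≤ (Pi.single l k : ι → R) a :=
    (Pi.single_nonneg.2 hk : (0 : ι → R) ≤ Pi.single l k) a
  have hsq (l : ι) : ∑ a, (Pi.single l k : ι → R) a ^ 2 = k ^ 2 :=
    calc ∑ a, (Pi.single l k : ι → R) a ^ 2 = Pi.single l k ⬝ᵥ Pi.single l k := by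
          simp only [sq, dotProduct]
      _ = k ^ 2 := by rw [dotProduct_single, Pi.single_eq_same, sq]
  calc ∑ a, (Pi.single i k - Pi.single j k : ι → R) a ^ 2
      ≤ ∑ a, ((Pi.single i k : ι → R) a ^ 2 + (Pi.single j k : ι → R) a ^ 2) :=
        sum_le_sum fun a _ => by
          simp only [Pi.sub_apply]
          linarith [mul_nonneg (hnonneg i a) (hnonneg j a)]
    _ = 2 * k ^ 2 := by rw [sum_add_distrib, hsq, hsq, two_mul]

/-- Abel summation: the case `θ < M` suffices because the level `M` itself has weight zero. -/
theorem sum_sub_mul_nonpos_of_sublevel_sums_nonpos {ι R : Type*} [CommRing R] [LinearOrder R]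
    [IsStrictOrderedRing R] (G w : ι → R) (s : Finset ι) (M : R) (hM : ∀ i ∈ s, G i ≤ M)
    (hw : ∀ θ < M, ∑ i ∈ s with G i ≤ θ, w i ≤ 0) : ∑ i ∈ s, (M - G i) * w i ≤ 0 := by
  classical
  induction s using Finset.induction_on_max_value G generalizing M with
  | empty => simp
  | insert a s ha hmax ih =>
    have haM : G a ≤ M := hM a (mem_insert_self a s)
    have below_top : ∑ i ∈ s, (G a - G i) * w i ≤ 0 := ih (G a) hmax fun θ hθ => by
      simpa only [filter_insert, if_neg hθ.not_ge] using hw θ (hθ.trans_le haM)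
    have top_layer : (M - G a) * ∑ i ∈ insert a s, w i ≤ 0 := by
      rcases haM.eq_or_lt with heq | hlt
      · simp [heq]
      · refine mul_nonpos_of_nonneg_of_nonpos (sub_nonneg.2 haM) ?_
        simpa [filter_true_of_mem hmax, filter_insert] using hw (G a) hlt
    calc ∑ i ∈ insert a s, (M - G i) * w i
        = (M - G a) * ∑ i ∈ insert a s, w i + ∑ i ∈ s, (G a - G i) * w i := by
          simp only [sum_insert ha, mul_add, mul_sum, sub_mul, sum_sub_distrib]
          ring
      _ ≤ 0 := add_nonpos top_layer below_top

theorem mem_of_forall_separated {α : Type*} [Fintype α] [DecidableEq α] {𝒯 : Set (Finset α)}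
    (hsup : SupClosed 𝒯) (hinf : InfClosed 𝒯) (huniv : univ ∈ 𝒯) {S : Finset α}
    (hS : S.Nonempty) (hsep : ∀ a ∈ S, ∀ b ∉ S, ∃ U ∈ 𝒯, a ∈ U ∧ b ∉ U) : S ∈ 𝒯 := by
  have hnhd (a : α) (ha : a ∈ S) : ∃ V ∈ 𝒯, a ∈ V ∧ V ⊆ S := by
    choose! U hU𝒯 haU hbU using hsep a ha
    refine ⟨Sᶜ.inf U, inf_induction huniv (fun _ h₁ _ h₂ => hinf h₁ h₂) fun b hb =>
      hU𝒯 b (mem_compl.1 hb), mem_inf.2 fun b hb => haU b (mem_compl.1 hb), fun b hb => ?_⟩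
    by_contra hbS
    exact hbU b hbS (mem_inf.1 hb b (mem_compl.2 hbS))
  choose! V hV𝒯 haV hVS using hnhd
  have hSV : S.sup' hS V = S :=
    le_antisymm (sup'_le hS V hVS) fun a ha => (mem_sup' hS).2 ⟨a, ha, haV a ha⟩
  exact hSV ▸ hsup.finsetSup'_mem hS hV𝒯

theorem le_of_mem_zmultiples_of_pos {G : Type*} [AddCommGroup G] [LinearOrder G]
    [IsOrderedAddMonoid G] {k t : G} (hk : 0 < k) (hmem : t ∈ AddSubgroup.zmultiples k)
    (ht : 0 < t) : k ≤ t := by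
  obtain ⟨n, rfl⟩ := AddSubgroup.mem_zmultiples_iff.1 hmem
  have hn : 0 < n := (zsmul_lt_zsmul_iff_left hk).1 ((zero_zsmul k).trans_lt ht)
  simpa using (zsmul_le_zsmul_iff_left hk).2 (Int.add_one_le_iff.2 hn)

theorem exists_nat_eq_mul_iff {R : Type*} [Ring R] [LinearOrder R] [IsStrictOrderedRing R]
    {k t : R} (hk : 0 < k) :
    (∃ q : ℕ, t = k * q) ↔ 0 ≤ t ∧ t ∈ AddSubgroup.zmultiples k := by
  constructor
  · rintro ⟨q, rfl⟩
    exact ⟨by positivity, AddSubgroup.mem_zmultiples_iff.2 ⟨q, by simp [Nat.cast_comm]⟩⟩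
  · rintro ⟨ht, hmem⟩
    obtain ⟨n, rfl⟩ := AddSubgroup.mem_zmultiples_iff.1 hmem
    lift n to ℕ using (zsmul_le_zsmul_iff_left hk).1 ((zero_zsmul k).trans_le ht)
    exact ⟨n, by simp [Nat.cast_comm]⟩

section BasePolytope

variable {E : Type*} [Fintype E] [DecidableEq E] {ρ : Finset E → ℝ} {d k : ℝ} {x y : E → ℝ}

theorem memBase.le_demand (hx : memBase ρ d x) (e : E) : x e ≤ d :=
  hx.2.2 ▸ single_le_sum (fun a _ => hx.1 a) (mem_univ e)

theorem memBase.nonempty (hx : memBase ρ d x) (hd : 0 < d) : Nonempty E := by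
  by_contra! hE
  exact hd.ne (by simpa using hx.2.2)

theorem memKBase_iff (hk : 0 < k) :
    memKBase ρ d k x ↔ memBase ρ d x ∧ ∀ e, x e ∈ AddSubgroup.zmultiples k := by
  simp only [memKBase, exists_nat_eq_mul_iff hk]
  exact and_congr_right fun hx => forall_congr' fun e => and_iff_right (hx.1 e)

/-- The sets whose rank constraint is tight at `x`. The ground set is always included: the demand
constraint fixes the weight of every base there, even when `d < ρ univ`. -/
def tightSets (ρ : Finset E → ℝ) (x : E → ℝ) : Set (Finset E) :=
  {U | ∑ e ∈ U, x e = ρ U ∨ U = univ}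

/-- The dependence function of the polymatroid: `dep ρ x e` consists of the resources lying in
every tight set containing `e`, that is, those from which weight can be moved to `e`. -/
def dep (ρ : Finset E → ℝ) (x : E → ℝ) (e : E) : Set E :=
  {h | ∀ U ∈ tightSets ρ x, e ∈ U → h ∈ U}

theorem sum_le_sum_of_mem_tightSets (hx : memBase ρ d x) (hy : memBase ρ d y) {U : Finset E}
    (hU : U ∈ tightSets ρ x) : ∑ e ∈ U, y e ≤ ∑ e ∈ U, x e := by
  rcases hU with hU | rfl
  · exact hU ▸ hy.2.1 U
  · rw [hx.2.2, hy.2.2]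

theorem union_inter_mem_tightSets (hρ : ∀ U V, ρ (U ∪ V) + ρ (U ∩ V) ≤ ρ U + ρ V)
    (hx : memBase ρ d x) {U V : Finset E} (hU : U ∈ tightSets ρ x) (hV : V ∈ tightSets ρ x) :
    U ∪ V ∈ tightSets ρ x ∧ U ∩ V ∈ tightSets ρ x := by
  rcases hU with hU | rfl
  · rcases hV with hV | rfl
    · have hunion := hx.2.1 (U ∪ V)
      have hinter := hx.2.1 (U ∩ V)
      have hmodular := sum_union_inter (s₁ := U) (s₂ := V) (f := x)
      have hsubmodular := hρ U V
      exact ⟨.inl (by linarith), .inl (by linarith)⟩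
    · simpa [tightSets] using Or.inl hU
  · simpa [tightSets] using hV

theorem mem_tightSets_of_dep_subset (hρ : ∀ U V, ρ (U ∪ V) + ρ (U ∩ V) ≤ ρ U + ρ V)
    (hx : memBase ρ d x) {S : Finset E} (hS : S.Nonempty) (hdep : ∀ e ∈ S, dep ρ x e ⊆ S) :
    S ∈ tightSets ρ x := by
  refine mem_of_forall_separated (fun U hU V hV => (union_inter_mem_tightSets hρ hx hU hV).1)
    (fun U hU V hV => (union_inter_mem_tightSets hρ hx hU hV).2) (.inr rfl) hS fun e he h hh => ?_
  simpa [dep] using fun hmem => hh (hdep e he hmem)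

theorem dotProduct_sub_nonneg_of_le_of_mem_dep
    (hρ : ∀ U V, ρ (U ∪ V) + ρ (U ∩ V) ≤ ρ U + ρ V) (hx : memBase ρ d x) (hy : memBase ρ d y)
    {G : E → ℝ} (hG : ∀ e, ∀ h ∈ dep ρ x e, G h ≤ G e) : 0 ≤ G ⬝ᵥ (y - x) := by
  obtain ⟨M, hM⟩ := (Set.finite_range G).bddAbove
  have hsublevel (θ : ℝ) : ∑ e with G e ≤ θ, (y - x) e ≤ 0 := by
    rcases (univ.filter fun e => G e ≤ θ).eq_empty_or_nonempty with hS | hS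
    · simp [hS]
    · have htight := mem_tightSets_of_dep_subset hρ hx hS fun e he h hh => by
        simp only [coe_filter, mem_filter, mem_univ, true_and] at he ⊢
        exact (hG e h hh).trans he
      simpa using sum_le_sum_of_mem_tightSets hx hy htight
  have habel := sum_sub_mul_nonpos_of_sublevel_sums_nonpos G (y - x) univ M
    (fun e _ => hM ⟨e, rfl⟩) fun θ _ => hsublevel θ
  have htotal : ∑ e, (y - x) e = 0 := by simp [hx.2.2, hy.2.2]
  simp only [sub_mul, sum_sub_distrib, ← mul_sum, htotal] at habel
  rw [dotProduct]
  linarith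

theorem neg_mul_le_dotProduct_sub_of_mem_dep
    (hρ : ∀ U V, ρ (U ∪ V) + ρ (U ∩ V) ≤ ρ U + ρ V) (hx : memBase ρ d x) (hy : memBase ρ d y)
    {g : E → ℝ} {η : ℝ} (hg : ∀ e, ∀ h ∈ dep ρ x e, 0 < x h → g h ≤ g e + η) :
    -(η * d) ≤ g ⬝ᵥ (y - x) := by
  -- The largest minorant of `g` that decreases along the dependence relation.
  let G : E → ℝ := fun h => ⨅ e : {e // h ∈ dep ρ x e}, g e
  have hself (h : E) : h ∈ dep ρ x h := fun _ _ => id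
  have : ∀ h, Nonempty {e // h ∈ dep ρ x e} := fun h => ⟨h, hself h⟩
  have G_le {e h : E} (hh : h ∈ dep ρ x e) : G h ≤ g e :=
    ciInf_le (Set.finite_range _).bddBelow (⟨e, hh⟩ : {e // h ∈ dep ρ x e})
  have G_dep (e h : E) (hh : h ∈ dep ρ x e) : G h ≤ G e :=
    le_ciInf fun ⟨_, he⟩ => G_le fun U hU ha => hh U hU (he U hU ha)
  have le_G {h : E} (hpos : 0 < x h) : g h - η ≤ G h :=
    le_ciInf fun ⟨e, hh⟩ => sub_le_iff_le_add.2 (hg e h hh hpos)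
  have hterm (e : E) : G e * (y - x) e - η * x e ≤ g e * (y - x) e := by
    have hy_part : G e * y e ≤ g e * y e := mul_le_mul_of_nonneg_right (G_le (hself e)) (hy.1 e)
    have hx_part : (g e - η) * x e ≤ G e * x e := by
      rcases (hx.1 e).eq_or_lt with hzero | hpos
      · simp [← hzero]
      · exact mul_le_mul_of_nonneg_right (le_G hpos) hpos.le
    simp only [Pi.sub_apply]
    linarith
  calc -(η * d) ≤ G ⬝ᵥ (y - x) - η * d := by
        linarith [dotProduct_sub_nonneg_of_le_of_mem_dep hρ hx hy G_dep]
    _ = ∑ e, (G e * (y - x) e - η * x e) := by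
        rw [sum_sub_distrib, ← mul_sum, hx.2.2, dotProduct]
    _ ≤ g ⬝ᵥ (y - x) := sum_le_sum fun e _ => hterm e

theorem memKBase_add_single_sub_single (hk : 0 < k)
    (hρk : ∀ U, ρ U ∈ AddSubgroup.zmultiples k) (hx : memKBase ρ d k x) {e h : E}
    (hdep : h ∈ dep ρ x e) (hpos : 0 < x h) :
    memKBase ρ d k (x + Pi.single e k - Pi.single h k) := by
  rw [memKBase_iff hk] at hx ⊢
  obtain ⟨hbase, hmult⟩ := hx
  have hsingle (a b : E) : (Pi.single a k : E → ℝ) b ∈ AddSubgroup.zmultiples k := by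
    by_cases hab : b = a
    · simp [hab]
    · simp [hab, zero_mem]
  have hnonneg (a : E) : (Pi.single h k : E → ℝ) a ≤ x a := by
    by_cases hah : a = h
    · simpa [hah] using le_of_mem_zmultiples_of_pos hk (hmult h) hpos
    · simpa [hah] using hbase.1 a
  have hslack {U : Finset E} (heU : e ∈ U) (hhU : h ∉ U) : ∑ a ∈ U, x a + k ≤ ρ U := by
    have hlt : ∑ a ∈ U, x a < ρ U :=
      (hbase.2.1 U).lt_of_ne fun htight => hhU (hdep U (.inl htight) heU)
    have hgap := le_of_mem_zmultiples_of_pos hk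
      (sub_mem (hρk U) (sum_mem fun a _ => hmult a)) (sub_pos.2 hlt)
    linarith
  refine ⟨⟨fun a => ?_, fun U => ?_, ?_⟩, fun a =>
    sub_mem (add_mem (hmult a) (hsingle e a)) (hsingle h a)⟩
  · have hadd : (0 : E → ℝ) a ≤ (Pi.single e k : E → ℝ) a := Pi.single_nonneg.2 hk.le a
    simp only [Pi.sub_apply, Pi.add_apply, Pi.zero_apply] at hadd ⊢
    linarith [hnonneg a]
  · rw [sum_add_single_sub_single]
    have hU := hbase.2.1 U
    split_ifs with heU hhU hhU
    · linarith
    · linarith [hslack heU hhU]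
    · linarith
    · linarith
  · rw [sum_add_single_sub_single]
    simpa using hbase.2.2

end BasePolytope

section PlayerCost

variable {E : Type*} [Fintype E] {c : E → ℝ → ℝ} {L : ℝ≥0}

/-- The cost of a player with strategy `x` when `ℓ` is the total load, the load of `x` included. -/
def playerCost (c : E → ℝ → ℝ) (ℓ x : E → ℝ) : ℝ :=
  ∑ e, c e (ℓ e) * x e

/-- The gradient of the player's cost in her own strategy `x`, at total load `ℓ`: changing `x`
changes the load by the same amount. -/
noncomputable def marginalCost (c : E → ℝ → ℝ) (ℓ x : E → ℝ) (e : E) : ℝ :=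
  c e (ℓ e) + x e * deriv (c e) (ℓ e)

theorem playerCost_add_marginalCost_le (hcmono : ∀ e, Monotone (c e))
    (hcdiff : ∀ e, Differentiable ℝ (c e)) (hcconv : ∀ e, ConvexOn ℝ Set.univ (c e))
    (ℓ x : E → ℝ) {y : E → ℝ} (hy : ∀ e, 0 ≤ y e) :
    playerCost c ℓ x + marginalCost c ℓ x ⬝ᵥ (y - x) ≤ playerCost c (ℓ + (y - x)) y := by
  rw [playerCost, playerCost, dotProduct, ← sum_add_distrib]
  refine sum_le_sum fun e _ => ?_
  have htangent := convexOn_add_deriv_mul_le (hcconv e) (Set.mem_univ (ℓ e))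
    (Set.mem_univ (ℓ e + (y e - x e))) (hcdiff e (ℓ e))
  have hquadratic : 0 ≤ deriv (c e) (ℓ e) * (y e - x e) ^ 2 :=
    mul_nonneg (hcmono e).deriv_nonneg (sq_nonneg _)
  simp only [marginalCost, Pi.add_apply, Pi.sub_apply]
  calc c e (ℓ e) * x e + (c e (ℓ e) + x e * deriv (c e) (ℓ e)) * (y e - x e)
      = (c e (ℓ e) + deriv (c e) (ℓ e) * (y e - x e)) * y e -
          deriv (c e) (ℓ e) * (y e - x e) ^ 2 := by ring
    _ ≤ (c e (ℓ e) + deriv (c e) (ℓ e) * (y e - x e)) * y e := sub_le_self _ hquadratic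
    _ ≤ c e (ℓ e + (y e - x e)) * y e :=
        mul_le_mul_of_nonneg_right (by simpa using htangent) (hy e)

theorem playerCost_le_add_marginalCost (hcdiff : ∀ e, Differentiable ℝ (c e))
    (hlip : ∀ e, LipschitzWith L (c e)) (hlip' : ∀ e, LipschitzWith L (deriv (c e)))
    (ℓ z : E → ℝ) {x : E → ℝ} (hx : ∀ e, 0 ≤ x e) :
    playerCost c (ℓ + (z - x)) z ≤
      playerCost c ℓ x + marginalCost c ℓ x ⬝ᵥ (z - x) +
        ∑ e, L * (x e + 1) * (z e - x e) ^ 2 := by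
  rw [playerCost, playerCost, dotProduct, ← sum_add_distrib, ← sum_add_distrib]
  refine sum_le_sum fun e _ => ?_
  simpa [marginalCost] using
    mul_add_le_of_lipschitzWith_deriv (hcdiff e) (hlip e) (hlip' e) (ℓ e) (z e - x e) (hx e)

end PlayerCost

section BestResponse

variable {E : Type*} [Fintype E] [DecidableEq E] {ρ : Finset E → ℝ} {d k : ℝ} {c : E → ℝ → ℝ}
  {L : ℝ≥0} {ℓ x : E → ℝ}

theorem marginalCost_le_of_mem_dep (hcdiff : ∀ e, Differentiable ℝ (c e))
    (hlip : ∀ e, LipschitzWith L (c e)) (hlip' : ∀ e, LipschitzWith L (deriv (c e)))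
    (hk : 0 < k) (hρk : ∀ U, ρ U ∈ AddSubgroup.zmultiples k) (hx : memKBase ρ d k x)
    (hopt : ∀ z, memKBase ρ d k z → playerCost c ℓ x ≤ playerCost c (ℓ + (z - x)) z)
    {e h : E} (hdep : h ∈ dep ρ x e) (hpos : 0 < x h) :
    marginalCost c ℓ x h ≤ marginalCost c ℓ x e + 2 * k * L * (d + 1) := by
  set g := marginalCost c ℓ x
  set z := x + Pi.single e k - Pi.single h k with hz
  have hzx : z - x = Pi.single e k - Pi.single h k := by rw [hz]; abel
  have herror : ∑ a, L * (x a + 1) * (z a - x a) ^ 2 ≤ L * (d + 1) * (2 * k ^ 2) := by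
    have hd : 0 ≤ d := (hx.1.1 h).trans (hx.1.le_demand h)
    calc ∑ a, L * (x a + 1) * (z a - x a) ^ 2
        ≤ ∑ a, L * (d + 1) * (z - x) a ^ 2 := by
          simp only [Pi.sub_apply]
          gcongr with a
          exact hx.1.le_demand a
      _ ≤ L * (d + 1) * (2 * k ^ 2) := by
          rw [← mul_sum, hzx]
          gcongr
          exact sum_sq_single_sub_single_le hk.le e h
  have hchange : 0 ≤ g ⬝ᵥ (z - x) + L * (d + 1) * (2 * k ^ 2) := by
    linarith [hopt z (memKBase_add_single_sub_single hk hρk hx hdep hpos),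
      playerCost_le_add_marginalCost hcdiff hlip hlip' ℓ z hx.1.1]
  rw [hzx, dotProduct_sub, dotProduct_single, dotProduct_single] at hchange
  refine le_of_mul_le_mul_right ?_ hk
  linarith

theorem playerCost_sub_le_of_integral_best_response
    (hρ : ∀ U V, ρ (U ∪ V) + ρ (U ∩ V) ≤ ρ U + ρ V) (hcmono : ∀ e, Monotone (c e))
    (hcdiff : ∀ e, Differentiable ℝ (c e)) (hcconv : ∀ e, ConvexOn ℝ Set.univ (c e))
    (hlip : ∀ e, LipschitzWith L (c e)) (hlip' : ∀ e, LipschitzWith L (deriv (c e)))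
    (hk : 0 < k) (hρk : ∀ U, ρ U ∈ AddSubgroup.zmultiples k) (hx : memKBase ρ d k x)
    (hopt : ∀ z, memKBase ρ d k z → playerCost c ℓ x ≤ playerCost c (ℓ + (z - x)) z)
    {y : E → ℝ} (hy : memBase ρ d y) :
    playerCost c ℓ x - 2 * k * L * d * (d + 1) ≤ playerCost c (ℓ + (y - x)) y := by
  have hlinear := neg_mul_le_dotProduct_sub_of_mem_dep hρ hx.1 hy fun e h hdep hpos =>
    marginalCost_le_of_mem_dep hcdiff hlip hlip' hk hρk hx hopt hdep hpos
  linarith [playerCost_add_marginalCost_le hcmono hcdiff hcconv ℓ x hy.1]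

end BestResponse

theorem approximation_error_le {k L d δ m : ℝ} (hk : 0 ≤ k) (hL : 0 ≤ L) (hd : 0 ≤ d)
    (hdδ : d ≤ δ) (hm : 1 ≤ m) :
    2 * k * L * d * (d + 1) ≤ 2 * k * L * m ^ 2 * δ * (δ + 1) := by
  have hδ : 0 ≤ δ := hd.trans hdδ
  calc 2 * k * L * d * (d + 1) ≤ 2 * k * L * δ * (δ + 1) := by gcongr
    _ = 2 * k * L * 1 * δ * (δ + 1) := by ring
    _ ≤ 2 * k * L * m ^ 2 * δ * (δ + 1) := by
        gcongr
        exact one_le_pow₀ hm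

theorem stmt_9_general {N E : Type*} [Fintype N] [DecidableEq N] [Fintype E] [DecidableEq E]
    (ρ : N → Finset E → ℝ) (hρ : ∀ i U V, ρ i (U ∪ V) + ρ i (U ∩ V) ≤ ρ i U + ρ i V)
    (d : N → ℝ) (c : N → E → ℝ → ℝ)
    (hcmono : ∀ i e, Monotone (c i e))
    (hcdiff : ∀ i e, Differentiable ℝ (c i e))
    (hcconv : ∀ i e, ConvexOn ℝ Set.univ (c i e))
    (L : ℝ≥0) (hlip : ∀ i e, LipschitzWith L (c i e))
    (hlip' : ∀ i e, LipschitzWith L (deriv (c i e)))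
    (k : ℝ) (hk : 0 < k) (hρk : ∀ i U, ρ i U ∈ AddSubgroup.zmultiples k)
    (x : N → E → ℝ) (hx : ∀ i, memKBase (ρ i) (d i) k (x i))
    (heq : ∀ i yi, memKBase (ρ i) (d i) k yi →
      ∑ e, c i e (∑ j, Function.update x i yi j e) * yi e ≥
        ∑ e, c i e (∑ j, x j e) * x i e) :
    ∀ i yi, memBase (ρ i) (d i) yi →
      ∑ e, c i e (∑ j, Function.update x i yi j e) * yi e ≥
        ∑ e, c i e (∑ j, x j e) * x i e - 2 * k * L * d i * (d i + 1) := by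
  intro i yi hyi
  simp only [← Finset.sum_apply, sum_update_eq_add_sub] at heq ⊢
  exact playerCost_sub_le_of_integral_best_response (hρ i) (hcmono i) (hcdiff i) (hcconv i)
    (hlip i) (hlip' i) hk (hρk i) (hx i) (heq i) hyi

/-- The quantitative core of Theorem 1 of the paper: in an atomic splittable
polymatroid congestion game with `L`-Lipschitz costs and derivatives, with
`δ = max_i d_i` and `m = |E|`, every exact equilibrium of the `k`-integral game
`G_k` is a `2kLm²δ(δ+1)`-approximate equilibrium of `G`. -/
theorem stmt_9 {N E : Type*} [Fintype N] [Nonempty N] [DecidableEq N]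
    [Fintype E] [DecidableEq E]
    (ρ : N → Finset E → ℝ) (hρ : ∀ i, IsRank (ρ i))
    (d : N → ℝ) (hd : ∀ i, 0 < d i) (hdρ : ∀ i, d i ≤ ρ i Finset.univ)
    (c : N → E → ℝ → ℝ)
    (hcnonneg : ∀ i e t, 0 ≤ c i e t)
    (hcmono : ∀ i e, Monotone (c i e))
    (hcdiff : ∀ i e, Differentiable ℝ (c i e))
    (hcconv : ∀ i e, ConvexOn ℝ Set.univ (c i e))
    (L : ℝ) (hL : 0 < L)
    (hlip : ∀ i e x y, |c i e y - c i e x| ≤ L * |y - x|)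
    (hlip' : ∀ i e x y, |deriv (c i e) y - deriv (c i e) x| ≤ L * |y - x|)
    (δ : ℝ) (hδ : IsGreatest (Set.range d) δ)
    (k : ℝ) (hk : 0 < k)
    (hρk : ∀ i U, ∃ q : ℕ, ρ i U = k * q)
    (hdk : ∀ i, ∃ q : ℕ, d i = k * q)
    (x : N → E → ℝ) (hx : ∀ i, memKBase (ρ i) (d i) k (x i))
    (heq : ∀ i yi, memKBase (ρ i) (d i) k yi →
      ∑ e, c i e (∑ j, Function.update x i yi j e) * yi e ≥
        ∑ e, c i e (∑ j, x j e) * x i e) :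
    ∀ i yi, memBase (ρ i) (d i) yi →
      ∑ e, c i e (∑ j, Function.update x i yi j e) * yi e ≥
        ∑ e, c i e (∑ j, x j e) * x i e -
          2 * k * L * (Fintype.card E : ℝ) ^ 2 * δ * (δ + 1) := by
  intro i yi hyi
  lift L to ℝ≥0 using hL.le
  have hE : Nonempty E := hyi.nonempty (hd i)
  have herror := approximation_error_le hk.le L.coe_nonneg (hd i).le (hδ.2 ⟨i, rfl⟩)
    (Nat.one_le_cast.2 (Fintype.card_pos (α := E)))
  exact (sub_le_sub_left herror _).trans <| stmt_9_general ρ (fun i => (hρ i).1) d c hcmono hcdiff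
    hcconv L (fun i e => .of_dist_le_mul fun a b => hlip i e b a)
    (fun i e => .of_dist_le_mul fun a b => hlip' i e b a) k hk
    (fun i U => ((exists_nat_eq_mul_iff hk).1 (hρk i U)).2) x hx heq i yi hyi
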